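/- Let n be a positive integer and let λ = (λ_1,…,λ_r) and μ = (μ_1,…,μ_s) be compositions of n, with associated blocks Y_i(λ), Y_j(μ) and Young subgroups S_λ, S_μ ≤ S_n. Then the map sending a permutation σ ∈ S_n to the r×s matrix (card(σ(Y_i(λ)) ∩ Y_j(μ)))_{i,j} induces a bijection between the set of double cosets S_μ\S_n/S_λ and the set of r×s matrices γ = (γ_{ij}) of nonnegative integers satisfying ∑_{j=1}^{s} γ_{ij} = λ_i for all i and ∑_{i=1}^{r} γ_{ij} = μ_j for all j. -/

import Mathlib

/-!
A partition of a finite set into labelled blocks is the same as a labelling of its points. If `f`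
and `g` label the points by their `λ`-block and their `μ`-block, the matrix of `σ` is the
contingency table of the pair of labellings `(f, g ∘ σ)`. A pair of labellings is determined by its
table up to a permutation of the points, which yields injectivity on double cosets: if
`(f, g ∘ σ') = (f, g ∘ σ) ∘ τ₂`, then `τ₂` lies in `S_λ` and `σ' τ₂⁻¹ σ⁻¹` in `S_μ`. For
surjectivity, take a set with `γ i j` points labelled `(i, j)`. The row sums let one identify it
with `{1, …, n}` so that the first label becomes `f`, the column sums so that the second becomes
`g`, and `σ` compares the two identifications.
-/

/-- The `i`-th consecutive block of `{0, …, n-1}` (0-indexed version of `{1, …, n}`)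
associated to a composition `lam = (lam 0, …, lam (r-1))` of `n`. -/
def blockSet (n : ℕ) {r : ℕ} (lam : Fin r → ℕ) (i : Fin r) : Finset (Fin n) :=
  Finset.univ.filter fun x : Fin n =>
    (∑ i' ∈ Finset.Iio i, lam i') ≤ (x : ℕ) ∧ (x : ℕ) < ∑ i' ∈ Finset.Iic i, lam i'

section ContingencyTable

open Finset

variable {α β ι κ : Type*} [Fintype α] [Fintype β] [DecidableEq ι] [DecidableEq κ]

/-- The contingency table of two labellings `f` and `g` of the points of a finite type: its
`(i, j)` entry counts the points with labels `i` and `j`. -/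
def contingencyTable (f : α → ι) (g : α → κ) (i : ι) (j : κ) : ℕ :=
  #{x | f x = i ∧ g x = j}

theorem contingencyTable_swap (f : α → ι) (g : α → κ) (i : ι) (j : κ) :
    contingencyTable g f j i = contingencyTable f g i j := by
  simp only [contingencyTable, and_comm]

theorem sum_contingencyTable_right [Fintype κ] (f : α → ι) (g : α → κ) (i : ι) :
    ∑ j, contingencyTable f g i j = #{x | f x = i} := by
  simp only [contingencyTable, ← filter_filter]
  exact (card_eq_sum_card_fiberwise fun _ _ ↦ mem_coe.2 (mem_univ _)).symm

theorem sum_contingencyTable_left [Fintype ι] (f : α → ι) (g : α → κ) (j : κ) :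
    ∑ i, contingencyTable f g i j = #{x | g x = j} := by
  simp only [← contingencyTable_swap f g, sum_contingencyTable_right]

theorem card_filter_comp_equiv (e : α ≃ β) (p : β → Prop) [DecidablePred p] :
    #{x | p (e x)} = #{y | p y} :=
  card_equiv e fun _ ↦ by simp only [mem_filter_univ]

theorem contingencyTable_comp_equiv (e : α ≃ β) (f : β → ι) (g : β → κ) :
    contingencyTable (f ∘ e) (g ∘ e) = contingencyTable f g := by
  ext i j
  exact card_filter_comp_equiv e fun y ↦ f y = i ∧ g y = j

theorem exists_equiv_comp_eq_of_card_fiber_eq {f : α → ι} {g : β → ι}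
    (h : ∀ i, #{x | f x = i} = #{y | g y = i}) : ∃ e : α ≃ β, g ∘ e = f := by
  have fiberEquiv (i : ι) : Nonempty ({x // f x = i} ≃ {y // g y = i}) := by
    rw [← Fintype.card_eq, Fintype.card_subtype, Fintype.card_subtype, h i]
  exact ⟨Equiv.ofFiberEquiv fun i ↦ (fiberEquiv i).some, funext (Equiv.ofFiberEquiv_map _)⟩

theorem contingencyTable_eq_iff_exists_equiv {f : α → ι} {g : α → κ} {f' : β → ι} {g' : β → κ} :
    contingencyTable f g = contingencyTable f' g' ↔
      ∃ e : α ≃ β, f' ∘ e = f ∧ g' ∘ e = g := by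
  constructor
  · intro h
    obtain ⟨e, he⟩ := exists_equiv_comp_eq_of_card_fiber_eq
      (f := fun x ↦ (f x, g x)) (g := fun y ↦ (f' y, g' y)) fun ⟨i, j⟩ ↦ by
        simpa only [contingencyTable, Prod.mk.injEq] using congr_fun₂ h i j
    exact ⟨e, congrArg (Prod.fst ∘ ·) he, congrArg (Prod.snd ∘ ·) he⟩
  · rintro ⟨e, rfl, rfl⟩
    exact contingencyTable_comp_equiv e f' g'

theorem contingencyTable_comp_perm_eq_iff {f : α → ι} {g : α → κ} {σ σ' : Equiv.Perm α} :
    contingencyTable f (g ∘ σ) = contingencyTable f (g ∘ σ') ↔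
      ∃ τ₁ τ₂ : Equiv.Perm α, g ∘ τ₁ = g ∧ f ∘ τ₂ = f ∧ σ' = τ₁ * σ * τ₂ := by
  rw [eq_comm, contingencyTable_eq_iff_exists_equiv]
  constructor
  · rintro ⟨τ, hf, hg⟩
    refine ⟨σ' * τ⁻¹ * σ⁻¹, τ, funext fun x ↦ ?_, hf, by group⟩
    simpa using (congr_fun hg (τ⁻¹ (σ⁻¹ x))).symm
  · rintro ⟨τ₁, τ₂, hg, hf, rfl⟩
    exact ⟨τ₂, hf, congrArg (· ∘ σ ∘ τ₂) hg.symm⟩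

theorem contingencyTable_sigma_fin [Fintype ι] [Fintype κ] (γ : ι → κ → ℕ) :
    contingencyTable (fun x : Σ p : ι × κ, Fin (γ p.1 p.2) ↦ x.1.1) (fun x ↦ x.1.2) = γ := by
  ext i j
  simp only [contingencyTable, ← Prod.mk_inj, Prod.mk.eta]
  rw [← Fintype.card_subtype, Fintype.card_congr (Equiv.sigmaSubtype (i, j)), Fintype.card_fin]

theorem exists_equiv_contingencyTable_eq [Fintype ι] [Fintype κ] {f : α → ι} {g : β → κ}
    {γ : ι → κ → ℕ} (hrow : ∀ i, ∑ j, γ i j = #{x | f x = i})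
    (hcol : ∀ j, ∑ i, γ i j = #{y | g y = j}) :
    ∃ σ : α ≃ β, contingencyTable f (g ∘ σ) = γ := by
  let rowLabel (x : Σ p : ι × κ, Fin (γ p.1 p.2)) : ι := x.1.1
  let colLabel (x : Σ p : ι × κ, Fin (γ p.1 p.2)) : κ := x.1.2
  have hγ : contingencyTable rowLabel colLabel = γ := contingencyTable_sigma_fin γ
  obtain ⟨e, he⟩ : ∃ e : _ ≃ α, f ∘ e = rowLabel :=
    exists_equiv_comp_eq_of_card_fiber_eq fun i ↦ by
      rw [← hrow, ← sum_contingencyTable_right rowLabel colLabel, hγ]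
  obtain ⟨e', he'⟩ : ∃ e' : _ ≃ β, g ∘ e' = colLabel :=
    exists_equiv_comp_eq_of_card_fiber_eq fun j ↦ by
      rw [← hcol, ← sum_contingencyTable_left rowLabel colLabel, hγ]
  have hcomp : (g ∘ e.symm.trans e') ∘ e = colLabel := by
    rw [← he']
    ext x
    simp only [Function.comp_apply, Equiv.trans_apply, Equiv.symm_apply_apply]
  refine ⟨e.symm.trans e', ?_⟩
  rw [← contingencyTable_comp_equiv e, he, hcomp, hγ]

theorem image_equiv_fiber [DecidableEq β] (σ : α ≃ β) (f : α → ι) (i : ι) :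
    image σ ({x | f x = i} : Finset α) = ({y | f (σ.symm y) = i} : Finset β) := by
  ext y
  simp [← Equiv.eq_symm_apply]

theorem card_image_fiber_inter_fiber [DecidableEq β] (σ : α ≃ β) (f : α → ι) (g : β → κ)
    (i : ι) (j : κ) :
    #(image σ ({x | f x = i} : Finset α) ∩ ({y | g y = j} : Finset β)) =
      contingencyTable f (g ∘ σ) i j := by
  rw [image_equiv_fiber, ← filter_and, ← card_filter_comp_equiv σ]
  simp only [contingencyTable, Equiv.symm_apply_apply, Function.comp_apply]

theorem forall_image_fiber_eq_iff [DecidableEq α] {f : α → ι} {τ : Equiv.Perm α} :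
    (∀ i, image τ ({x | f x = i} : Finset α) = ({x | f x = i} : Finset α)) ↔ f ∘ τ = f := by
  calc
    (∀ i, image τ ({x | f x = i} : Finset α) = ({x | f x = i} : Finset α))
      ↔ ∀ i x, f (τ.symm x) = i ↔ f x = i := by
        simp only [image_equiv_fiber, filter_inj', mem_univ, true_imp_iff]
    _ ↔ f ∘ τ.symm = f := by
      rw [funext_iff, forall_comm]
      exact forall_congr' fun x ↦ eq_iff_eq_cancel_right
    _ ↔ f ∘ τ = f := by rw [Equiv.comp_symm_eq, eq_comm]

end ContingencyTable

section Blocks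

open Finset Function

theorem exists_eq_fiber_of_existsUnique_mem {α ι : Type*} [Fintype α] [DecidableEq ι]
    {Y : ι → Finset α} (hY : ∀ x, ∃! i, x ∈ Y i) :
    ∃ f : α → ι, ∀ i, Y i = ({x | f x = i} : Finset α) := by
  choose f hmem huniq using hY
  refine ⟨f, fun i ↦ ?_⟩
  ext x
  rw [mem_filter_univ]
  exact ⟨fun hx ↦ (huniq x i hx).symm, fun hx ↦ hx ▸ hmem x⟩

variable {n r : ℕ} {lam : Fin r → ℕ}

theorem mem_blockSet {i : Fin r} {x : Fin n} :
    x ∈ blockSet n lam i ↔ ∑ k ∈ Iio i, lam k ≤ x ∧ x < ∑ k ∈ Iic i, lam k :=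
  mem_filter_univ x

theorem card_blockSet (hsum : ∑ i, lam i = n) (i : Fin r) : #(blockSet n lam i) = lam i := by
  have hle : ∑ k ∈ Iic i, lam k ≤ n := hsum ▸ sum_le_univ_sum_of_nonneg fun _ ↦ Nat.zero_le _
  have hattach : blockSet n lam i = (Ico (∑ k ∈ Iio i, lam k) (∑ k ∈ Iic i, lam k)).attachFin
      fun _ hm ↦ (mem_Ico.1 hm).2.trans_le hle := by
    ext x
    rw [mem_blockSet, mem_attachFin, mem_Ico]
  rw [hattach, card_attachFin, Nat.card_Ico, ← Iio_insert, sum_insert notMem_Iio_self,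
    Nat.add_sub_cancel_right]

theorem pairwise_disjoint_blockSet : Pairwise (Disjoint on blockSet n lam) := by
  rw [pairwise_disjoint_on]
  intro i j hij
  rw [disjoint_left]
  intro x hi hj
  have hsub : Iic i ⊆ Iio j := fun k hk ↦ mem_Iio.2 ((mem_Iic.1 hk).trans_lt hij)
  have hend : x < ∑ k ∈ Iic i, lam k := (mem_blockSet.1 hi).2
  have hstart : ∑ k ∈ Iio j, lam k ≤ x := (mem_blockSet.1 hj).1
  exact (hend.trans_le (sum_le_sum_of_subset hsub)).not_ge hstart

theorem existsUnique_mem_blockSet (hsum : ∑ i, lam i = n) (x : Fin n) :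
    ∃! i, x ∈ blockSet n lam i := by
  have hcover : univ.biUnion (blockSet n lam) = univ := by
    rw [← card_eq_iff_eq_univ, card_biUnion fun i _ j _ hij ↦ pairwise_disjoint_blockSet hij]
    simp only [card_blockSet hsum, hsum, Fintype.card_fin]
  obtain ⟨i, -, hi⟩ := mem_biUnion.1 (hcover ▸ mem_univ x)
  refine ⟨i, hi, fun j hj ↦ ?_⟩
  by_contra hne
  exact disjoint_left.1 (pairwise_disjoint_blockSet hne) hj hi

end Blocks

open Finset in
theorem double_cosets_biject_with_matrices_general {α ι κ : Type*} [Finite α] [DecidableEq α]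
    [Fintype ι] [Fintype κ] {Y : ι → Finset α} {Z : κ → Finset α}
    (hY : ∀ x, ∃! i, x ∈ Y i) (hZ : ∀ x, ∃! j, x ∈ Z j) :
    (∀ σ : Equiv.Perm α,
      (∀ i, ∑ j, #((Y i).image σ ∩ Z j) = #(Y i)) ∧
      (∀ j, ∑ i, #((Y i).image σ ∩ Z j) = #(Z j))) ∧
    (∀ σ σ' : Equiv.Perm α,
      (∀ i j, #((Y i).image σ ∩ Z j) = #((Y i).image σ' ∩ Z j)) ↔
      ∃ τ₁ τ₂ : Equiv.Perm α,
        (∀ j, (Z j).image τ₁ = Z j) ∧ (∀ i, (Y i).image τ₂ = Y i) ∧ σ' = τ₁ * σ * τ₂) ∧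
    (∀ γ : ι → κ → ℕ, (∀ i, ∑ j, γ i j = #(Y i)) → (∀ j, ∑ i, γ i j = #(Z j)) →
      ∃ σ : Equiv.Perm α, ∀ i j, #((Y i).image σ ∩ Z j) = γ i j) := by
  have := Classical.decEq ι
  have := Classical.decEq κ
  cases nonempty_fintype α
  obtain ⟨f, hf⟩ := exists_eq_fiber_of_existsUnique_mem hY
  obtain ⟨g, hg⟩ := exists_eq_fiber_of_existsUnique_mem hZ
  simp only [hf, hg, card_image_fiber_inter_fiber, forall_image_fiber_eq_iff]
  refine ⟨fun σ ↦ ⟨sum_contingencyTable_right f (g ∘ σ), fun j ↦ ?_⟩, fun σ σ' ↦ ?_,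
    fun γ hrow hcol ↦ ?_⟩
  · rw [sum_contingencyTable_left]
    exact card_filter_comp_equiv σ fun x ↦ g x = j
  · rw [← contingencyTable_comp_perm_eq_iff]
    simp only [funext_iff]
  · obtain ⟨σ, hσ⟩ := exists_equiv_contingencyTable_eq hrow hcol
    exact ⟨σ, congr_fun₂ hσ⟩

/-- The map sending `σ ∈ S_n` to the matrix `(card (σ(Y_i(λ)) ∩ Y_j(μ)))_{i,j}` induces a
bijection between the double cosets `S_μ\S_n/S_λ` and the `r × s` matrices of nonnegative
integers with row sums `λ_i` and column sums `μ_j`: the matrix of any `σ` satisfies the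
constraints, two permutations have the same matrix iff they lie in the same double coset,
and every constrained matrix arises from some permutation. -/
theorem double_cosets_biject_with_matrices (n r s : ℕ) (hn : 0 < n)
    (lam : Fin r → ℕ) (mu : Fin s → ℕ)
    (hlampos : ∀ i, 0 < lam i) (hmupos : ∀ j, 0 < mu j)
    (hlamsum : ∑ i, lam i = n) (hmusum : ∑ j, mu j = n) :
    (∀ σ : Equiv.Perm (Fin n),
      (∀ i, ∑ j, (((blockSet n lam i).image ⇑σ) ∩ blockSet n mu j).card = lam i) ∧
      (∀ j, ∑ i, (((blockSet n lam i).image ⇑σ) ∩ blockSet n mu j).card = mu j)) ∧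
    (∀ σ σ' : Equiv.Perm (Fin n),
      (∀ (i : Fin r) (j : Fin s),
        (((blockSet n lam i).image ⇑σ) ∩ blockSet n mu j).card =
        (((blockSet n lam i).image ⇑σ') ∩ blockSet n mu j).card) ↔
      (∃ τ₁ τ₂ : Equiv.Perm (Fin n),
        (∀ j, (blockSet n mu j).image ⇑τ₁ = blockSet n mu j) ∧
        (∀ i, (blockSet n lam i).image ⇑τ₂ = blockSet n lam i) ∧
        σ' = τ₁ * σ * τ₂)) ∧
    (∀ γ : Fin r → Fin s → ℕ,
      (∀ i, ∑ j, γ i j = lam i) → (∀ j, ∑ i, γ i j = mu j) →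
      ∃ σ : Equiv.Perm (Fin n), ∀ (i : Fin r) (j : Fin s),
        (((blockSet n lam i).image ⇑σ) ∩ blockSet n mu j).card = γ i j) := by
  simpa only [card_blockSet hlamsum, card_blockSet hmusum] using
    double_cosets_biject_with_matrices_general
      (existsUnique_mem_blockSet hlamsum) (existsUnique_mem_blockSet hmusum)
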